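/- Pointwise bound on the curvature (Proposition 3.5(a), flat torus case): let (u, A) be a periodic configuration solving the YMH equations with u not identically zero. Then −h(x) ≤ F(x) ≤ h(x) for all x ∈ ℝ². Moreover, if F(x₀) = h(x₀) at some point x₀ then F ≡ h on ℝ², and if F(x₀) = −h(x₀) at some point x₀ then F ≡ −h on ℝ². -/

import Mathlib

open MeasureTheory Complex

noncomputable section

/-- Partial derivative in the first coordinate direction. -/
def pd1 {E : Type*} [NormedAddCommGroup E] [NormedSpace ℝ E] (f : ℝ × ℝ → E) (x : ℝ × ℝ) : E :=
  fderiv ℝ f x (1, 0)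

/-- Partial derivative in the second coordinate direction. -/
def pd2 {E : Type*} [NormedAddCommGroup E] [NormedSpace ℝ E] (f : ℝ × ℝ → E) (x : ℝ × ℝ) : E :=
  fderiv ℝ f x (0, 1)

/-- First covariant derivative `D₁f = ∂₁f − iA₁f`. -/
def D1 (A1 : ℝ × ℝ → ℝ) (f : ℝ × ℝ → ℂ) (x : ℝ × ℝ) : ℂ :=
  pd1 f x - Complex.I * (A1 x) * f x

/-- Second covariant derivative `D₂f = ∂₂f − iA₂f`. -/
def D2 (A2 : ℝ × ℝ → ℝ) (f : ℝ × ℝ → ℂ) (x : ℝ × ℝ) : ℂ :=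
  pd2 f x - Complex.I * (A2 x) * f x

/-- Curvature function `F = ∂₁A₂ − ∂₂A₁`. -/
def curv (A1 A2 : ℝ × ℝ → ℝ) (x : ℝ × ℝ) : ℝ := pd1 A2 x - pd2 A1 x

/-- `h = (1 − |u|²)/(2ε²)`. -/
def hfun (ε : ℝ) (u : ℝ × ℝ → ℂ) (x : ℝ × ℝ) : ℝ := (1 - ‖u x‖ ^ 2) / (2 * ε ^ 2)

/-- `σ₊ = D₁u + iD₂u`. -/
def sigP (u : ℝ × ℝ → ℂ) (A1 A2 : ℝ × ℝ → ℝ) (x : ℝ × ℝ) : ℂ :=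
  D1 A1 u x + Complex.I * D2 A2 u x

/-- `σ₋ = D₁u − iD₂u`. -/
def sigM (u : ℝ × ℝ → ℂ) (A1 A2 : ℝ × ℝ → ℝ) (x : ℝ × ℝ) : ℂ :=
  D1 A1 u x - Complex.I * D2 A2 u x

/-- The Yang--Mills--Higgs energy over the fundamental domain `[0,1]²`. -/
def energy (ε : ℝ) (u : ℝ × ℝ → ℂ) (A1 A2 : ℝ × ℝ → ℝ) : ℝ :=
  ∫ x in Set.Icc (0:ℝ) 1 ×ˢ Set.Icc (0:ℝ) 1,
    (ε ^ 2 * curv A1 A2 x ^ 2 + ‖D1 A1 u x‖ ^ 2 + ‖D2 A2 u x‖ ^ 2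
      + (1 - ‖u x‖ ^ 2) ^ 2 / (4 * ε ^ 2))

/-- `ℤ²`-periodicity. -/
def Periodic2 {E : Type*} (f : ℝ × ℝ → E) : Prop :=
  ∀ x : ℝ × ℝ, f (x.1 + 1, x.2) = f x ∧ f (x.1, x.2 + 1) = f x

/-- The Yang--Mills--Higgs equations on all of `ℝ²`. -/
def IsYMH (ε : ℝ) (u : ℝ × ℝ → ℂ) (A1 A2 : ℝ × ℝ → ℝ) : Prop :=
  (∀ x, -(D1 A1 (D1 A1 u) x + D2 A2 (D2 A2 u) x) = (hfun ε u x : ℂ) * u x) ∧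
  (∀ x, ε ^ 2 * pd2 (curv A1 A2) x = ((starRingEnd ℂ) (u x) * D1 A1 u x).im) ∧
  (∀ x, ε ^ 2 * pd1 (curv A1 A2) x = -((starRingEnd ℂ) (u x) * D2 A2 u x).im)

/-- The Yang--Mills--Higgs equations on an open set `U ⊆ ℝ²`. -/
def IsYMHOn (ε : ℝ) (u : ℝ × ℝ → ℂ) (A1 A2 : ℝ × ℝ → ℝ) (U : Set (ℝ × ℝ)) : Prop :=
  (∀ x ∈ U, -(D1 A1 (D1 A1 u) x + D2 A2 (D2 A2 u) x) = (hfun ε u x : ℂ) * u x) ∧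
  (∀ x ∈ U, ε ^ 2 * pd2 (curv A1 A2) x = ((starRingEnd ℂ) (u x) * D1 A1 u x).im) ∧
  (∀ x ∈ U, ε ^ 2 * pd1 (curv A1 A2) x = -((starRingEnd ℂ) (u x) * D2 A2 u x).im)

/-- Stability: nonnegative second variation of the energy along all smooth periodic
variations of the section and the connection. -/
def Stable (ε : ℝ) (u : ℝ × ℝ → ℂ) (A1 A2 : ℝ × ℝ → ℝ) : Prop :=
  ∀ v : ℝ × ℝ → ℂ, ∀ a1 a2 : ℝ × ℝ → ℝ,
    ContDiff ℝ (⊤ : ℕ∞) v → Periodic2 v → ContDiff ℝ (⊤ : ℕ∞) a1 → Periodic2 a1 →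
    ContDiff ℝ (⊤ : ℕ∞) a2 → Periodic2 a2 →
    0 ≤ iteratedDeriv 2 (fun t : ℝ =>
      energy ε (fun x => u x + t • v x)
        (fun x => A1 x + t * a1 x) (fun x => A2 x + t * a2 x)) 0

/-!
With `σ₊ = D₁u + iD₂u`, the two first-order equations combine into `ε²(∂₁ + i∂₂)(h - F) = -ū σ₊`,
and the second-order one becomes `(D₁ - iD₂)σ₊ = (F - h)u` because `[D₁, D₂] = -iF`.
Differentiating the former once more yields `ε² Δ(h - F) = |u|² (h - F) - |σ₊|²`, hence
`ε² Δ(h - F) ≤ |u|² (h - F)`. On the torus `h - F` attains its minimum, and the strong maximum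
principle, proved by comparison with Hopf's Gaussian barrier, gives `h - F ≥ 0`, with equality
either nowhere or everywhere. Complex conjugation `(u, A) ↦ (ū, -A)` preserves the equations and
`h` and changes the sign of `F`, which gives the bound from below.

The maximum principle is applied on `ℂ` because `ℝ × ℝ` carries the sup norm and so has no
`Laplacian`.
-/

open Metric Set Filter Topology Laplacian InnerProductSpace ComplexConjugate
open scoped ContDiff

section SecondOrderCondition

variable {E F : Type*} [NormedAddCommGroup E] [NormedSpace ℝ E]
  [NormedAddCommGroup F] [NormedSpace ℝ F]

theorem fderiv_fderiv_apply {f : E → F} {x : E} (hf : DifferentiableAt ℝ (fderiv ℝ f) x)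
    (v w : E) : fderiv ℝ (fun y => fderiv ℝ f y v) x w = fderiv ℝ (fderiv ℝ f) x w v := by
  simp [fderiv_clm_apply hf (differentiableAt_const v)]

theorem deriv_deriv_comp_add_smul {f : E → F} {x : E} (hf : ContDiffAt ℝ 2 f x) (v : E) :
    deriv (deriv fun t : ℝ => f (x + t • v)) 0 = iteratedFDeriv ℝ 2 f x ![v, v] := by
  have hline (t : ℝ) : HasDerivAt (fun t : ℝ => x + t • v) v t := by
    simpa using ((hasDerivAt_id t).smul_const v).const_add x
  have hline_zero : Tendsto (fun t : ℝ => x + t • v) (𝓝 0) (𝓝 x) := by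
    simpa using (hline 0).continuousAt.tendsto
  have hderiv : deriv (fun t : ℝ => f (x + t • v)) =ᶠ[𝓝 0] fun t => fderiv ℝ f (x + t • v) v := by
    filter_upwards [hline_zero.eventually (hf.eventually (by simp))] with t ht
    exact ((ht.differentiableAt (by simp)).hasFDerivAt.comp_hasDerivAt t (hline t)).deriv
  have hfderiv : DifferentiableAt ℝ (fderiv ℝ f) x :=
    (hf.fderiv_right (m := 1) le_rfl).differentiableAt (by simp)
  calc deriv (deriv fun t : ℝ => f (x + t • v)) 0
      = lineDeriv ℝ (fun y => fderiv ℝ f y v) x v := hderiv.deriv_eq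
    _ = fderiv ℝ (fun y => fderiv ℝ f y v) x v :=
        (hfderiv.clm_apply (differentiableAt_const v)).lineDeriv_eq_fderiv
    _ = iteratedFDeriv ℝ 2 f x ![v, v] := by
        rw [fderiv_fderiv_apply hfderiv, iteratedFDeriv_two_apply]
        rfl

theorem deriv_deriv_nonneg_of_isLocalMin {f : ℝ → ℝ} {a : ℝ} (hmin : IsLocalMin f a)
    (hf : ContinuousAt f a) : 0 ≤ deriv (deriv f) a := by
  by_contra! hneg
  have hmax : IsLocalMax f a := isLocalMax_of_deriv_deriv_neg hneg hmin.deriv_eq_zero hf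
  have hconst : f =ᶠ[𝓝 a] fun _ => f a := by
    filter_upwards [hmin, hmax] with t hle hge using le_antisymm hge hle
  have hzero : deriv (deriv f) a = 0 := by simpa using hconst.deriv.deriv_eq
  exact hneg.ne hzero

theorem iteratedFDeriv_two_nonneg_of_isLocalMin {f : E → ℝ} {x : E} (hmin : IsLocalMin f x)
    (hf : ContDiffAt ℝ 2 f x) (v : E) : 0 ≤ iteratedFDeriv ℝ 2 f x ![v, v] := by
  have hline : ContinuousAt (fun t : ℝ => x + t • v) 0 := by fun_prop
  rw [← deriv_deriv_comp_add_smul hf]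
  refine deriv_deriv_nonneg_of_isLocalMin ?_ (hf.continuousAt.comp_of_eq hline (by simp))
  have hmin_zero : IsMinFilter f (𝓝 (x + (0 : ℝ) • v)) (x + (0 : ℝ) • v) := by
    simpa using! hmin
  exact hmin_zero.comp_tendsto (g := fun t : ℝ => x + t • v) hline

end SecondOrderCondition

section MaximumPrinciple

variable {E : Type*} [NormedAddCommGroup E] [InnerProductSpace ℝ E]

/-- The unnormalised Gaussian `exp (-α |x - p|²)` centred at `p`, the barrier in Hopf's proof of
the strong maximum principle. -/
def gaussianBump (α : ℝ) (p x : E) : ℝ := Real.exp (-α * ‖x - p‖ ^ 2)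

theorem contDiff_gaussianBump {n : WithTop ℕ∞} (α : ℝ) (p : E) :
    ContDiff ℝ n (gaussianBump α p) :=
  (contDiff_const.mul ((contDiff_id.sub contDiff_const).norm_sq ℝ)).exp

variable [FiniteDimensional ℝ E]

theorem laplacian_sub_const {f : E → ℝ} {x : E} (hf : ContDiffAt ℝ 2 f x) (b : ℝ) :
    Δ (f - fun _ : E => b) x = Δ f x := by
  rw [hf.laplacian_sub contDiffAt_const, laplacian_const, Pi.zero_apply, sub_zero]

theorem laplacian_nonneg_of_isLocalMin {f : E → ℝ} {x : E} (hmin : IsLocalMin f x)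
    (hf : ContDiffAt ℝ 2 f x) : 0 ≤ Δ f x := by
  rw [laplacian_eq_iteratedFDeriv_stdOrthonormalBasis]
  exact Finset.sum_nonneg fun i _ => iteratedFDeriv_two_nonneg_of_isLocalMin hmin hf _

theorem nonneg_of_laplacian_neg {K U : Set E} {f : E → ℝ} (hK : IsCompact K) (hU : IsOpen U)
    (hUK : U ⊆ K) (hfK : ContinuousOn f K) (hfU : ContDiffOn ℝ 2 f U)
    (hlap : ∀ x ∈ U, f x < 0 → Δ f x < 0) (hbdry : ∀ x ∈ K \ U, 0 ≤ f x) {x : E} (hx : x ∈ K) :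
    0 ≤ f x := by
  obtain ⟨y, hyK, hymin⟩ := hK.exists_isMinOn ⟨x, hx⟩ hfK
  refine le_trans ?_ (hymin hx)
  by_contra! hneg
  have hyU : y ∈ U := by
    by_contra hyU
    exact hneg.not_ge (hbdry y ⟨hyK, hyU⟩)
  have hUy : U ∈ 𝓝 y := hU.mem_nhds hyU
  have hlocal : IsLocalMin f y := hymin.isLocalMin (mem_of_superset hUy hUK)
  exact (hlap y hyU hneg).not_ge (laplacian_nonneg_of_isLocalMin hlocal (hfU.contDiffAt hUy))

theorem deriv_deriv_exp_quadratic (a b c : ℝ) :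
    deriv (deriv fun t => Real.exp (a * t ^ 2 + b * t + c)) 0 = (b ^ 2 + 2 * a) * Real.exp c := by
  have hquad (t : ℝ) : HasDerivAt (fun t => a * t ^ 2 + b * t + c) (2 * a * t + b) t := by
    have h := (((hasDerivAt_pow 2 t).const_mul a).add ((hasDerivAt_id t).const_mul b)).add_const c
    exact h.congr_deriv (by push_cast; ring)
  have hderiv : deriv (fun t => Real.exp (a * t ^ 2 + b * t + c)) =
      fun t => Real.exp (a * t ^ 2 + b * t + c) * (2 * a * t + b) :=
    funext fun t => (hquad t).exp.deriv
  have hlin : HasDerivAt (fun t => 2 * a * t + b) (2 * a) 0 := by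
    simpa using ((hasDerivAt_id (0 : ℝ)).const_mul (2 * a)).add_const b
  rw [hderiv, ((hquad 0).exp.fun_mul hlin).deriv]
  ring_nf

theorem laplacian_gaussianBump (α : ℝ) (p x : E) :
    Δ (gaussianBump α p) x =
      (4 * α ^ 2 * ‖x - p‖ ^ 2 - 2 * α * Module.finrank ℝ E) * gaussianBump α p x := by
  set e := stdOrthonormalBasis ℝ E
  have hdir (i) : iteratedFDeriv ℝ 2 (gaussianBump α p) x ![e i, e i] =
      (4 * α ^ 2 * ⟪x - p, e i⟫_ℝ ^ 2 - 2 * α) * gaussianBump α p x := by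
    have hline : (fun t : ℝ => gaussianBump α p (x + t • e i)) = fun t =>
        Real.exp (-α * t ^ 2 + -2 * α * ⟪x - p, e i⟫_ℝ * t + -α * ‖x - p‖ ^ 2) := by
      funext t
      rw [gaussianBump, add_sub_right_comm, norm_add_sq_real, inner_smul_right, norm_smul,
        e.norm_eq_one, mul_one, Real.norm_eq_abs, sq_abs]
      ring_nf
    rw [← deriv_deriv_comp_add_smul (contDiff_gaussianBump α p).contDiffAt, hline,
      deriv_deriv_exp_quadratic, gaussianBump]
    ring
  have hparseval : ∑ i, ⟪x - p, e i⟫_ℝ ^ 2 = ‖x - p‖ ^ 2 := e.sum_sq_inner_left (x - p)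
  simp_rw [laplacian_eq_iteratedFDeriv_orthonormalBasis _ e, hdir, ← Finset.sum_mul,
    Finset.sum_sub_distrib, ← Finset.mul_sum, hparseval, Finset.sum_const, Finset.card_univ,
    Fintype.card_fin, nsmul_eq_mul]
  ring

theorem exists_mul_gaussianBump_lt_laplacian (C : ℝ) {r : ℝ} (hr : 0 < r) (p : E) :
    ∃ α > 0, ∀ x, r < ‖x - p‖ → C * gaussianBump α p x < Δ (gaussianBump α p) x := by
  have hlarge : ∀ᶠ α : ℝ in atTop, C < α * (4 * r ^ 2 * α - 2 * Module.finrank ℝ E) :=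
    (tendsto_id.atTop_mul_atTop₀ (tendsto_atTop_add_const_right _ _
      (tendsto_id.const_mul_atTop (by positivity)))).eventually_gt_atTop C
  obtain ⟨α, hCα, hα⟩ := (hlarge.and (eventually_gt_atTop 0)).exists
  refine ⟨α, hα, fun x hx => ?_⟩
  rw [laplacian_gaussianBump]
  refine mul_lt_mul_of_pos_right ?_ (Real.exp_pos _)
  calc C < 4 * α ^ 2 * r ^ 2 - 2 * α * Module.finrank ℝ E := by linarith
    _ ≤ 4 * α ^ 2 * ‖x - p‖ ^ 2 - 2 * α * Module.finrank ℝ E := by gcongr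

theorem mul_gaussianBump_sub_le {v : E → ℝ} {C α δ r S : ℝ} {p : E} (hC : 0 ≤ C) (hα : 0 ≤ α)
    (hδ : 0 < δ) (hbarrier : ∀ x, r < ‖x - p‖ → C * gaussianBump α p x < Δ (gaussianBump α p) x)
    (hvS : ContinuousOn v (closedBall p S)) (hv : ContDiffOn ℝ 2 v (ball p S))
    (hnonneg : ∀ x ∈ closedBall p S, 0 ≤ v x) (hlap : ∀ x ∈ ball p S, Δ v x ≤ C * v x)
    (hδr : ∀ x ∈ closedBall p r, δ ≤ v x) {x : E} (hx : x ∈ closedBall p S) :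
    δ * (gaussianBump α p x - Real.exp (-α * S ^ 2)) ≤ v x := by
  set β := Real.exp (-α * S ^ 2)
  have hβ : 0 < β := Real.exp_pos _
  have hbump : ContDiff ℝ 2 (gaussianBump α p - fun _ => β) :=
    (contDiff_gaussianBump α p).sub contDiff_const
  have hbarrier_smooth : ContDiff ℝ 2 (δ • (gaussianBump α p - fun _ => β)) := hbump.const_smul δ
  rw [← sub_nonneg]
  refine nonneg_of_laplacian_neg (f := v - δ • (gaussianBump α p - fun _ => β))
    (U := ball p S \ closedBall p r) (isCompact_closedBall p S)
    (isOpen_ball.sdiff isClosed_closedBall) (sdiff_subset.trans ball_subset_closedBall)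
    (hvS.sub hbarrier_smooth.continuous.continuousOn)
    ((hv.mono sdiff_subset).sub hbarrier_smooth.contDiffOn) ?_ ?_ hx
  · rintro y ⟨hyS, hyr⟩ hneg
    have hvy : v y < δ * (gaussianBump α p y - β) := sub_neg.1 hneg
    have hstrict := hbarrier y (by simpa [dist_eq_norm] using hyr)
    rw [(hv.contDiffAt (isOpen_ball.mem_nhds hyS)).laplacian_sub hbarrier_smooth.contDiffAt,
      laplacian_smul δ hbump.contDiffAt, laplacian_sub_const (contDiff_gaussianBump α p).contDiffAt,
      smul_eq_mul, sub_neg]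
    calc Δ v y ≤ C * v y := hlap y hyS
      _ ≤ C * (δ * gaussianBump α p y) := by gcongr; linarith [mul_pos hδ hβ]
      _ = δ * (C * gaussianBump α p y) := by ring
      _ < δ * Δ (gaussianBump α p) y := by gcongr
  · rintro y ⟨hyS, hy⟩
    refine sub_nonneg.2 ?_
    by_cases hyr : y ∈ closedBall p r
    · have hbump_le : gaussianBump α p y ≤ 1 :=
        Real.exp_le_one_iff.2 (mul_nonpos_of_nonpos_of_nonneg (neg_nonpos.2 hα) (sq_nonneg _))
      calc δ * (gaussianBump α p y - β) ≤ δ * 1 := by gcongr; linarith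
        _ ≤ v y := by simpa using hδr y hyr
    · have hy_sphere : ‖y - p‖ = S := by
        rw [← dist_eq_norm]
        exact le_antisymm hyS (not_lt.1 fun hlt => hy ⟨hlt, hyr⟩)
      simpa [gaussianBump, hy_sphere, β] using hnonneg y hyS

/-- If `v p > 0`, then `v` dominates near `p` a small multiple of a Gaussian lowered to vanish on a
sphere enclosing `x₀`, hence `v x₀ > 0`. -/
theorem eq_zero_of_laplacian_le_of_mem_ball {v : E → ℝ} {C R : ℝ} {p x₀ : E}
    (hv : ContDiffOn ℝ 2 v (ball p R)) (hnonneg : ∀ x ∈ ball p R, 0 ≤ v x)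
    (hlap : ∀ x ∈ ball p R, Δ v x ≤ C * v x) (hx₀ : x₀ ∈ ball p R) (hzero : v x₀ = 0) :
    v p = 0 := by
  by_contra hne
  have hR : 0 < R := pos_of_mem_ball hx₀
  have hpos : 0 < v p := (hnonneg p (mem_ball_self hR)).lt_of_ne' hne
  obtain ⟨δ, hδ, hδp⟩ := exists_between hpos
  have hcont : ContinuousAt v p := hv.continuousOn.continuousAt (ball_mem_nhds p hR)
  obtain ⟨r, hr, hδr⟩ := nhds_basis_closedBall.mem_iff.1 (hcont.eventually_const_lt hδp)
  obtain ⟨S, hS, hSR⟩ := exists_between (mem_ball.1 hx₀)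
  have hSsub : closedBall p S ⊆ ball p R := closedBall_subset_ball hSR
  obtain ⟨α, hα, hbarrier⟩ := exists_mul_gaussianBump_lt_laplacian |C| hr p
  have hlap_abs (x) (hx : x ∈ ball p R) : Δ v x ≤ |C| * v x :=
    (hlap x hx).trans (mul_le_mul_of_nonneg_right (le_abs_self C) (hnonneg x hx))
  have hcompare := mul_gaussianBump_sub_le (abs_nonneg C) hα.le hδ hbarrier
    (hv.continuousOn.mono hSsub) (hv.mono (ball_subset_ball hSR.le))
    (fun x hx => hnonneg x (hSsub hx)) (fun x hx => hlap_abs x (ball_subset_ball hSR.le hx))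
    (fun x hx => (hδr hx).le) (mem_closedBall.2 hS.le)
  have hbump : Real.exp (-α * S ^ 2) < gaussianBump α p x₀ := by
    rw [gaussianBump, Real.exp_lt_exp, ← dist_eq_norm, neg_mul, neg_mul, neg_lt_neg_iff]
    gcongr
  exact (hcompare.trans_eq hzero).not_gt (mul_pos hδ (sub_pos.2 hbump))

theorem eqOn_zero_of_laplacian_le {U : Set E} {v c : E → ℝ} {x₀ : E} (hU : IsOpen U)
    (hconn : IsPreconnected U) (hv : ContDiffOn ℝ 2 v U) (hc : ContinuousOn c U)
    (hnonneg : ∀ x ∈ U, 0 ≤ v x) (hlap : ∀ x ∈ U, Δ v x ≤ c x * v x) (hx₀ : x₀ ∈ U)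
    (hzero : v x₀ = 0) : EqOn v 0 U := by
  have hlocal : ∀ y ∈ U, v y = 0 → v =ᶠ[𝓝 y] 0 := by
    intro y hy hvy
    obtain ⟨R, hR, hball⟩ := nhds_basis_closedBall.mem_iff.1 (hU.mem_nhds hy)
    obtain ⟨C, hC⟩ := (isCompact_closedBall y R).bddAbove_image (hc.mono hball)
    filter_upwards [ball_mem_nhds y (half_pos hR)] with p hp
    have hsub : ball p (R / 2) ⊆ closedBall y R := fun x hx => by
      have := dist_triangle x p y
      rw [mem_ball] at hx hp
      rw [mem_closedBall]
      linarith
    refine eq_zero_of_laplacian_le_of_mem_ball (C := C) (hv.mono (hsub.trans hball))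
      (fun x hx => hnonneg x (hball (hsub hx))) (fun x hx => ?_) (mem_ball_comm.1 hp) hvy
    exact (hlap x (hball (hsub hx))).trans
      (mul_le_mul_of_nonneg_right (hC (mem_image_of_mem c (hsub hx))) (hnonneg x (hball (hsub hx))))
  have hsubset : U ⊆ {y | v =ᶠ[𝓝 y] 0} := by
    refine hconn.subset_of_closure_inter_subset isOpen_setOfPred_eventually_nhds
      ⟨x₀, hx₀, hlocal x₀ hx₀ hzero⟩ ?_
    rintro y ⟨hy, hyU⟩
    have hcont : ContinuousAt v y := hv.continuousOn.continuousAt (hU.mem_nhds hyU)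
    have hy_zero : v y ∈ closure {0} := hcont.continuousWithinAt.mem_closure hy
      fun z hz => hz.eq_of_nhds
    exact hlocal y hyU (by simpa using hy_zero)
  exact fun y hy => (hsubset hy).eq_of_nhds

theorem eqOn_const_of_isMinOn_of_laplacian_le {U : Set E} {f c : E → ℝ} {x₀ : E} (hU : IsOpen U)
    (hconn : IsPreconnected U) (hf : ContDiffOn ℝ 2 f U) (hc : ContinuousOn c U)
    (hc_nonneg : ∀ x ∈ U, 0 ≤ c x) (hlap : ∀ x ∈ U, Δ f x ≤ c x * f x) (hx₀ : x₀ ∈ U)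
    (hmin : IsMinOn f U x₀) (hnonpos : f x₀ ≤ 0) : EqOn f (fun _ => f x₀) U := by
  have hlap_sub (x) (hx : x ∈ U) : Δ (f - fun _ : E => f x₀) x ≤ c x * (f x - f x₀) := by
    rw [laplacian_sub_const (hf.contDiffAt (hU.mem_nhds hx))]
    linarith [hlap x hx, mul_nonpos_of_nonneg_of_nonpos (hc_nonneg x hx) hnonpos]
  have hzero := eqOn_zero_of_laplacian_le hU hconn (hf.sub contDiffOn_const) hc
    (fun x hx => sub_nonneg.2 (hmin hx)) hlap_sub hx₀ (sub_self _)
  exact fun x hx => sub_eq_zero.1 (hzero hx)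

theorem nonneg_of_isMinOn_of_laplacian_le {U : Set E} {f c : E → ℝ} {x₀ q : E} (hU : IsOpen U)
    (hconn : IsPreconnected U) (hf : ContDiffOn ℝ 2 f U) (hc : ContinuousOn c U)
    (hc_nonneg : ∀ x ∈ U, 0 ≤ c x) (hlap : ∀ x ∈ U, Δ f x ≤ c x * f x) (hx₀ : x₀ ∈ U)
    (hmin : IsMinOn f U x₀) (hq : q ∈ U) (hcq : 0 < c q) : 0 ≤ f x₀ := by
  by_contra! hneg
  have hconst := eqOn_const_of_isMinOn_of_laplacian_le hU hconn hf hc hc_nonneg hlap hx₀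
    hmin hneg.le
  have hlap_zero : Δ f q = 0 := by
    simpa using (laplacian_congr_nhds (hconst.eventuallyEq_of_mem (hU.mem_nhds hq))).eq_of_nhds
  have hle : 0 ≤ c q * f x₀ := by simpa [hlap_zero, hconst hq] using hlap q hq
  exact hle.not_gt (mul_neg_of_pos_of_neg hcq hneg)

end MaximumPrinciple

section Plane

variable {F : Type*} [NormedAddCommGroup F] [NormedSpace ℝ F]

theorem contDiff_pd1 {f : ℝ × ℝ → F} {m n : WithTop ℕ∞} (hf : ContDiff ℝ n f) (hmn : m + 1 ≤ n) :
    ContDiff ℝ m (pd1 f) :=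
  (hf.fderiv_right hmn).clm_apply contDiff_const

theorem contDiff_pd2 {f : ℝ × ℝ → F} {m n : WithTop ℕ∞} (hf : ContDiff ℝ n f) (hmn : m + 1 ≤ n) :
    ContDiff ℝ m (pd2 f) :=
  (hf.fderiv_right hmn).clm_apply contDiff_const

theorem laplacian_comp_equivRealProdCLM {f : ℝ × ℝ → F} (hf : ContDiff ℝ 2 f) (z : ℂ) :
    Δ (f ∘ equivRealProdCLM) z =
      pd1 (pd1 f) (equivRealProdCLM z) + pd2 (pd2 f) (equivRealProdCLM z) := by
  have hfderiv (x) : DifferentiableAt ℝ (fderiv ℝ f) x :=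
    (hf.fderiv_right (m := 1) le_rfl).differentiable (by simp) x
  have hsecond (v : ℂ) : iteratedFDeriv ℝ 2 (f ∘ equivRealProdCLM) z ![v, v] =
      fderiv ℝ (fun x => fderiv ℝ f x (equivRealProdCLM v)) (equivRealProdCLM z)
        (equivRealProdCLM v) := by
    rw [fderiv_fderiv_apply (hfderiv _),
      ← ContinuousLinearEquiv.coe_coe, ContinuousLinearMap.iteratedFDeriv_comp_right _ hf z le_rfl,
      ContinuousMultilinearMap.compContinuousLinearMap_apply, iteratedFDeriv_two_apply]
    rfl
  simp only [laplacian_eq_iteratedFDeriv_complexPlane, hsecond, equivRealProdCLM_apply, one_re,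
    one_im, I_re, I_im]
  rfl

end Plane

section Periodic

theorem Periodic2.apply_fract {X : Type*} {f : ℝ × ℝ → X} (hf : Periodic2 f) (x : ℝ × ℝ) :
    f (Int.fract x.1, Int.fract x.2) = f x := by
  have hfst : Function.Periodic (fun a => f (a, Int.fract x.2)) 1 := fun a => (hf (a, _)).1
  have hsnd : Function.Periodic (fun b => f (x.1, b)) 1 := fun b => (hf (_, b)).2
  calc f (Int.fract x.1, Int.fract x.2) = f (x.1, Int.fract x.2) := by
        simpa only [mul_one] using! hfst.sub_int_mul_eq ⌊x.1⌋
    _ = f x := by simpa only [mul_one] using! hsnd.sub_int_mul_eq ⌊x.2⌋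

theorem Periodic2.sub {G : Type*} [Sub G] {f g : ℝ × ℝ → G} (hf : Periodic2 f)
    (hg : Periodic2 g) : Periodic2 (f - g) :=
  fun x => ⟨congrArg₂ (· - ·) (hf x).1 (hg x).1, congrArg₂ (· - ·) (hf x).2 (hg x).2⟩

theorem Periodic2.comp {X Y : Type*} {f : ℝ × ℝ → X} (hf : Periodic2 f) (φ : X → Y) :
    Periodic2 fun x => φ (f x) :=
  fun x => ⟨congrArg φ (hf x).1, congrArg φ (hf x).2⟩

theorem Periodic2.exists_forall_le {f : ℝ × ℝ → ℝ} (hf : Periodic2 f) (hcont : Continuous f) :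
    ∃ x, ∀ y, f x ≤ f y := by
  have hcompact : IsCompact (Icc (0 : ℝ) 1 ×ˢ Icc (0 : ℝ) 1) := isCompact_Icc.prod isCompact_Icc
  obtain ⟨x, -, hx⟩ := hcompact.exists_isMinOn ⟨(0, 0), by simp⟩ hcont.continuousOn
  refine ⟨x, fun y => (hx ?_).trans_eq (hf.apply_fract y)⟩
  have hfract (t : ℝ) : Int.fract t ∈ Icc (0 : ℝ) 1 :=
    ⟨Int.fract_nonneg t, (Int.fract_lt_one t).le⟩
  exact ⟨hfract y.1, hfract y.2⟩

theorem Periodic2.fderiv_apply {F : Type*} [NormedAddCommGroup F] [NormedSpace ℝ F]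
    {f : ℝ × ℝ → F} (hf : Periodic2 f) (v : ℝ × ℝ) : Periodic2 fun x => fderiv ℝ f x v := by
  have hshift (w : ℝ × ℝ) (hw : ∀ x, f (x + w) = f x) (x : ℝ × ℝ) :
      fderiv ℝ f (x + w) v = fderiv ℝ f x v := by
    rw [← fderiv_comp_add_right, funext hw]
  intro x
  have hfst := hshift (1, 0) (fun y => by simpa only [Prod.add_def, add_zero] using (hf y).1) x
  have hsnd := hshift (0, 1) (fun y => by simpa only [Prod.add_def, add_zero] using (hf y).2) x
  simp only [Prod.add_def, add_zero] at hfst hsnd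
  exact ⟨hfst, hsnd⟩

end Periodic

section PlaneMaximumPrinciple

variable {f c : ℝ × ℝ → ℝ}

theorem eq_zero_of_pd_pd_le (hf : ContDiff ℝ 2 f) (hc : Continuous c) (hnonneg : ∀ x, 0 ≤ f x)
    (hlap : ∀ x, pd1 (pd1 f) x + pd2 (pd2 f) x ≤ c x * f x) {x₀ : ℝ × ℝ} (hzero : f x₀ = 0)
    (x : ℝ × ℝ) : f x = 0 := by
  have hcomplex : EqOn (f ∘ equivRealProdCLM) 0 univ :=
    eqOn_zero_of_laplacian_le (c := c ∘ equivRealProdCLM) (x₀ := equivRealProdCLM.symm x₀)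
      isOpen_univ isPreconnected_univ (hf.comp equivRealProdCLM.contDiff).contDiffOn
      (hc.comp equivRealProdCLM.continuous).continuousOn (fun z _ => hnonneg _)
      (fun z _ => (laplacian_comp_equivRealProdCLM hf z).trans_le (hlap _)) (mem_univ _)
      (by simpa using hzero)
  simpa using hcomplex (mem_univ (equivRealProdCLM.symm x))

theorem Periodic2.nonneg_of_pd_pd_le (hper : Periodic2 f) (hf : ContDiff ℝ 2 f)
    (hc : Continuous c) (hc_nonneg : ∀ x, 0 ≤ c x) {q : ℝ × ℝ} (hcq : 0 < c q)
    (hlap : ∀ x, pd1 (pd1 f) x + pd2 (pd2 f) x ≤ c x * f x) (x : ℝ × ℝ) : 0 ≤ f x := by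
  obtain ⟨x₀, hmin⟩ := hper.exists_forall_le hf.continuous
  have hmin_nonneg : 0 ≤ (f ∘ equivRealProdCLM) (equivRealProdCLM.symm x₀) :=
    nonneg_of_isMinOn_of_laplacian_le (c := c ∘ equivRealProdCLM) (q := equivRealProdCLM.symm q)
      isOpen_univ isPreconnected_univ (hf.comp equivRealProdCLM.contDiff).contDiffOn
      (hc.comp equivRealProdCLM.continuous).continuousOn (fun z _ => hc_nonneg _)
      (fun z _ => (laplacian_comp_equivRealProdCLM hf z).trans_le (hlap _)) (mem_univ _)
      (fun z _ => by simpa using hmin (equivRealProdCLM z)) (mem_univ _) (by simpa using hcq)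
  exact le_trans (by simpa using hmin_nonneg) (hmin x)

end PlaneMaximumPrinciple

section CovariantDerivative

variable {E : Type*} [NormedAddCommGroup E] [NormedSpace ℝ E]

/-- The covariant derivative of `f` in the direction `v` for a unitary connection on the trivial
line bundle over `E`, where `A x` is the value of the connection form at `x` on `v`. On the plane,
`D1 A` and `D2 A` are definitionally `covDeriv A (1, 0)` and `covDeriv A (0, 1)`. -/
def covDeriv (A : E → ℝ) (v : E) (f : E → ℂ) (x : E) : ℂ :=
  fderiv ℝ f x v - I * A x * f x

variable {A B : E → ℝ} {f g : E → ℂ} {x : E}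

theorem contDiff_covDeriv {m n : WithTop ℕ∞} (hA : ContDiff ℝ m A) (hf : ContDiff ℝ n f)
    (hmn : m + 1 ≤ n) (v : E) : ContDiff ℝ m (covDeriv A v f) :=
  ((hf.fderiv_right hmn).clm_apply contDiff_const).sub
    ((contDiff_const.mul (ofRealCLM.contDiff.comp hA)).mul
      (hf.of_le (le_self_add.trans hmn)))

theorem covDeriv_add_const_mul (hf : DifferentiableAt ℝ f x) (hg : DifferentiableAt ℝ g x)
    (A : E → ℝ) (v : E) (a : ℂ) :
    covDeriv A v (fun y => f y + a * g y) x = covDeriv A v f x + a * covDeriv A v g x := by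
  simp only [covDeriv, fderiv_fun_add hf (hg.const_mul a), fderiv_const_mul hg, add_apply,
    smul_apply, smul_eq_mul]
  ring

theorem covDeriv_neg_conj (A : E → ℝ) (v : E) (f : E → ℂ) (x : E) :
    covDeriv (-A) v (fun y => conj (f y)) x = conj (covDeriv A v f x) := by
  have hfderiv : fderiv ℝ (fun y => conj (f y)) x v = conj (fderiv ℝ f x v) :=
    DFunLike.congr_fun conjCLE.comp_fderiv v
  simp only [covDeriv, hfderiv, map_sub, map_mul, conj_I, conj_ofReal, Pi.neg_apply, ofReal_neg]
  ring

theorem fderiv_conj_mul (hf : DifferentiableAt ℝ f x) (hg : DifferentiableAt ℝ g x)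
    (A : E → ℝ) (v : E) :
    fderiv ℝ (fun y => conj (f y) * g y) x v =
      conj (covDeriv A v f x) * g x + conj (f x) * covDeriv A v g x := by
  have hconj : HasFDerivAt (fun y => conj (f y)) ((conjCLE : ℂ →L[ℝ] ℂ) ∘L fderiv ℝ f x) x :=
    conjCLE.toContinuousLinearMap.hasFDerivAt.comp x hf.hasFDerivAt
  rw [(hconj.fun_mul hg.hasFDerivAt).fderiv]
  simp only [add_apply, smul_apply, smul_eq_mul, ContinuousLinearMap.comp_apply,
    ContinuousLinearEquiv.coe_coe, ContinuousAlgEquiv.coeCLE_apply, conjCAE_apply, covDeriv,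
    map_sub, map_mul, conj_I, conj_ofReal]
  ring

theorem fderiv_norm_sq_eq_re (hf : DifferentiableAt ℝ f x) (A : E → ℝ) (v : E) :
    fderiv ℝ (fun y => ‖f y‖ ^ 2) x v = 2 * (conj (f x) * covDeriv A v f x).re := by
  rw [hf.hasFDerivAt.norm_sq.fderiv]
  simp only [smul_apply, ContinuousLinearMap.comp_apply, coe_innerSL_apply, Complex.inner, mul_re,
    mul_im, conj_re, conj_im, covDeriv, sub_re, sub_im, I_re, I_im, ofReal_re, ofReal_im,
    nsmul_eq_mul, Nat.cast_ofNat]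
  ring

theorem fderiv_covDeriv (hA : DifferentiableAt ℝ A x) (hf : ContDiffAt ℝ 2 f x) (v w : E) :
    fderiv ℝ (covDeriv A v f) x w =
      fderiv ℝ (fderiv ℝ f) x w v - I * (fderiv ℝ A x w * f x + A x * fderiv ℝ f x w) := by
  have hfderiv : DifferentiableAt ℝ (fderiv ℝ f) x :=
    (hf.fderiv_right (m := 1) le_rfl).differentiableAt (by simp)
  have hA_ofReal : HasFDerivAt (fun y => (A y : ℂ)) (ofRealCLM ∘L fderiv ℝ A x) x :=
    ofRealCLM.hasFDerivAt.comp x hA.hasFDerivAt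
  have hcov : HasFDerivAt (covDeriv A v f) _ x :=
    (hfderiv.clm_apply (differentiableAt_const v)).hasFDerivAt.fun_sub
      ((hA_ofReal.const_mul I).fun_mul (hf.differentiableAt (by simp)).hasFDerivAt)
  rw [hcov.fderiv]
  simp only [sub_apply, fderiv_fderiv_apply hfderiv, add_apply, smul_apply, smul_eq_mul,
    ContinuousLinearMap.comp_apply, ofRealCLM_apply]
  ring

theorem covDeriv_covDeriv_sub (hA : DifferentiableAt ℝ A x) (hB : DifferentiableAt ℝ B x)
    (hf : ContDiffAt ℝ 2 f x) (v w : E) :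
    covDeriv A v (covDeriv B w f) x - covDeriv B w (covDeriv A v f) x =
      -I * (fderiv ℝ B x v - fderiv ℝ A x w) * f x := by
  have hsymm : IsSymmSndFDerivAt ℝ f x := hf.isSymmSndFDerivAt (by simp)
  rw [covDeriv, covDeriv.eq_def B w (covDeriv A v f), fderiv_covDeriv hB hf,
    fderiv_covDeriv hA hf, hsymm.eq, covDeriv, covDeriv]
  ring

end CovariantDerivative

section ReIm

variable {E : Type*} [NormedAddCommGroup E] [NormedSpace ℝ E] {f : E → ℂ} {x : E}

theorem fderiv_re_apply (hf : DifferentiableAt ℝ f x) (v : E) :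
    fderiv ℝ (fun y => (f y).re) x v = (fderiv ℝ f x v).re :=
  DFunLike.congr_fun (reCLM.hasFDerivAt.comp x hf.hasFDerivAt).fderiv v

theorem fderiv_im_apply (hf : DifferentiableAt ℝ f x) (v : E) :
    fderiv ℝ (fun y => (f y).im) x v = (fderiv ℝ f x v).im :=
  DFunLike.congr_fun (imCLM.hasFDerivAt.comp x hf.hasFDerivAt).fderiv v

end ReIm

section YangMillsHiggs

variable {ε : ℝ} {u : ℝ × ℝ → ℂ} {A1 A2 : ℝ × ℝ → ℝ}

theorem contDiff_curv {m n : WithTop ℕ∞} (hA1 : ContDiff ℝ n A1) (hA2 : ContDiff ℝ n A2)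
    (hmn : m + 1 ≤ n) : ContDiff ℝ m (curv A1 A2) :=
  (contDiff_pd1 hA2 hmn).sub (contDiff_pd2 hA1 hmn)

theorem contDiff_hfun {n : WithTop ℕ∞} (hu : ContDiff ℝ n u) (ε : ℝ) : ContDiff ℝ n (hfun ε u) :=
  (contDiff_const.sub (hu.norm_sq ℝ)).div_const _

theorem differentiableAt_hfun {x : ℝ × ℝ} (hu : DifferentiableAt ℝ u x) (ε : ℝ) :
    DifferentiableAt ℝ (hfun ε u) x :=
  ((hu.norm_sq ℝ).const_sub 1).mul_const (2 * ε ^ 2)⁻¹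

theorem contDiff_sigP {m n : WithTop ℕ∞} (hu : ContDiff ℝ n u) (hA1 : ContDiff ℝ m A1)
    (hA2 : ContDiff ℝ m A2) (hmn : m + 1 ≤ n) : ContDiff ℝ m (sigP u A1 A2) :=
  (contDiff_covDeriv hA1 hu hmn _).add (contDiff_const.mul (contDiff_covDeriv hA2 hu hmn _))

theorem periodic2_curv (hA1 : Periodic2 A1) (hA2 : Periodic2 A2) : Periodic2 (curv A1 A2) :=
  (hA2.fderiv_apply (1, 0)).sub (hA1.fderiv_apply (0, 1))

theorem periodic2_hfun (hu : Periodic2 fun x => ‖u x‖) (ε : ℝ) : Periodic2 (hfun ε u) :=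
  hu.comp fun r => (1 - r ^ 2) / (2 * ε ^ 2)

theorem sq_mul_fderiv_hfun (hε : ε ≠ 0) {x : ℝ × ℝ} (hu : DifferentiableAt ℝ u x) (A : ℝ × ℝ → ℝ)
    (v : ℝ × ℝ) :
    ε ^ 2 * fderiv ℝ (hfun ε u) x v = -(conj (u x) * covDeriv A v u x).re := by
  have hhfun : hfun ε u = (2 * ε ^ 2)⁻¹ • fun y => 1 - ‖u y‖ ^ 2 :=
    funext fun y => div_eq_inv_mul _ _
  rw [hhfun, fderiv_const_smul_field, Pi.smul_apply, smul_apply, fderiv_const_sub, neg_apply,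
    fderiv_norm_sq_eq_re hu A, smul_eq_mul]
  field_simp

theorem D1_D2_sub_D2_D1 {x : ℝ × ℝ} (hu : ContDiffAt ℝ 2 u x) (hA1 : DifferentiableAt ℝ A1 x)
    (hA2 : DifferentiableAt ℝ A2 x) :
    D1 A1 (D2 A2 u) x - D2 A2 (D1 A1 u) x = -I * curv A1 A2 x * u x := by
  rw [curv, ofReal_sub]
  exact covDeriv_covDeriv_sub hA1 hA2 hu (1, 0) (0, 1)

namespace IsYMH

theorem sq_mul_pd1_hfun_sub_curv (h : IsYMH ε u A1 A2) (hε : ε ≠ 0) {x : ℝ × ℝ}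
    (hu : DifferentiableAt ℝ u x) (hF : DifferentiableAt ℝ (curv A1 A2) x) :
    ε ^ 2 * pd1 (hfun ε u - curv A1 A2) x = -(conj (u x) * sigP u A1 A2 x).re := by
  calc ε ^ 2 * pd1 (hfun ε u - curv A1 A2) x
      = ε ^ 2 * pd1 (hfun ε u) x - ε ^ 2 * pd1 (curv A1 A2) x := by
        rw [pd1, fderiv_sub (differentiableAt_hfun hu ε) hF, sub_apply, mul_sub]
        rfl
    _ = -(conj (u x) * D1 A1 u x).re + (conj (u x) * D2 A2 u x).im := by
        rw [h.2.2 x, sub_neg_eq_add]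
        exact congrArg (· + _) (sq_mul_fderiv_hfun hε hu A1 _)
    _ = -(conj (u x) * sigP u A1 A2 x).re := by
        rw [sigP, mul_add, mul_left_comm, add_re, I_mul_re]
        ring

theorem sq_mul_pd2_hfun_sub_curv (h : IsYMH ε u A1 A2) (hε : ε ≠ 0) {x : ℝ × ℝ}
    (hu : DifferentiableAt ℝ u x) (hF : DifferentiableAt ℝ (curv A1 A2) x) :
    ε ^ 2 * pd2 (hfun ε u - curv A1 A2) x = -(conj (u x) * sigP u A1 A2 x).im := by
  calc ε ^ 2 * pd2 (hfun ε u - curv A1 A2) x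
      = ε ^ 2 * pd2 (hfun ε u) x - ε ^ 2 * pd2 (curv A1 A2) x := by
        rw [pd2, fderiv_sub (differentiableAt_hfun hu ε) hF, sub_apply, mul_sub]
        rfl
    _ = -(conj (u x) * D2 A2 u x).re - (conj (u x) * D1 A1 u x).im := by
        rw [h.2.1 x]
        exact congrArg (· - _) (sq_mul_fderiv_hfun hε hu A2 _)
    _ = -(conj (u x) * sigP u A1 A2 x).im := by
        rw [sigP, mul_add, mul_left_comm, add_im, I_mul_im]
        ring

theorem D1_sigP_sub_I_mul_D2_sigP (h : IsYMH ε u A1 A2) (hu : ContDiff ℝ 2 u)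
    (hA1 : ContDiff ℝ 1 A1) (hA2 : ContDiff ℝ 1 A2) (x : ℝ × ℝ) :
    D1 A1 (sigP u A1 A2) x - I * D2 A2 (sigP u A1 A2) x =
      (curv A1 A2 x - hfun ε u x : ℝ) * u x := by
  have hD1u : DifferentiableAt ℝ (D1 A1 u) x :=
    (contDiff_covDeriv hA1 hu le_rfl _).differentiable (by simp) x
  have hD2u : DifferentiableAt ℝ (D2 A2 u) x :=
    (contDiff_covDeriv hA2 hu le_rfl _).differentiable (by simp) x
  have hD1 : D1 A1 (sigP u A1 A2) x = D1 A1 (D1 A1 u) x + I * D1 A1 (D2 A2 u) x :=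
    covDeriv_add_const_mul hD1u hD2u A1 _ I
  have hD2 : D2 A2 (sigP u A1 A2) x = D2 A2 (D1 A1 u) x + I * D2 A2 (D2 A2 u) x :=
    covDeriv_add_const_mul hD1u hD2u A2 _ I
  have hcomm := D1_D2_sub_D2_D1 hu.contDiffAt (hA1.differentiable (by simp) x)
    (hA2.differentiable (by simp) x)
  rw [hD1, hD2, ofReal_sub]
  linear_combination I * hcomm - h.1 x - (curv A1 A2 x * u x + D2 A2 (D2 A2 u) x) * I_mul_I

theorem sq_mul_pd1_pd1_hfun_sub_curv (h : IsYMH ε u A1 A2) (hε : ε ≠ 0)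
    (hu : Differentiable ℝ u) (hF : Differentiable ℝ (curv A1 A2)) {x : ℝ × ℝ}
    (hσ : DifferentiableAt ℝ (sigP u A1 A2) x) :
    ε ^ 2 * pd1 (pd1 (hfun ε u - curv A1 A2)) x =
      -(conj (D1 A1 u x) * sigP u A1 A2 x + conj (u x) * D1 A1 (sigP u A1 A2) x).re := by
  have hpair : DifferentiableAt ℝ (fun y => conj (u y) * sigP u A1 A2 y) x :=
    (conjCLE.differentiableAt.comp x (hu x)).mul hσ
  have hfirst : ε ^ 2 • pd1 (hfun ε u - curv A1 A2) =
      fun y => -(conj (u y) * sigP u A1 A2 y).re :=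
    funext fun y => h.sq_mul_pd1_hfun_sub_curv hε (hu y) (hF y)
  calc ε ^ 2 * pd1 (pd1 (hfun ε u - curv A1 A2)) x
      = pd1 (ε ^ 2 • pd1 (hfun ε u - curv A1 A2)) x := by
        rw [pd1, pd1, fderiv_const_smul_field]
        rfl
    _ = -(pd1 (fun y => conj (u y) * sigP u A1 A2 y) x).re := by
        rw [hfirst, pd1, fderiv_fun_neg, neg_apply, fderiv_re_apply hpair]
        rfl
    _ = _ := congrArg (fun z : ℂ => -z.re) (fderiv_conj_mul (hu x) hσ A1 (1, 0))

theorem sq_mul_pd2_pd2_hfun_sub_curv (h : IsYMH ε u A1 A2) (hε : ε ≠ 0)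
    (hu : Differentiable ℝ u) (hF : Differentiable ℝ (curv A1 A2)) {x : ℝ × ℝ}
    (hσ : DifferentiableAt ℝ (sigP u A1 A2) x) :
    ε ^ 2 * pd2 (pd2 (hfun ε u - curv A1 A2)) x =
      -(conj (D2 A2 u x) * sigP u A1 A2 x + conj (u x) * D2 A2 (sigP u A1 A2) x).im := by
  have hpair : DifferentiableAt ℝ (fun y => conj (u y) * sigP u A1 A2 y) x :=
    (conjCLE.differentiableAt.comp x (hu x)).mul hσ
  have hfirst : ε ^ 2 • pd2 (hfun ε u - curv A1 A2) =
      fun y => -(conj (u y) * sigP u A1 A2 y).im :=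
    funext fun y => h.sq_mul_pd2_hfun_sub_curv hε (hu y) (hF y)
  calc ε ^ 2 * pd2 (pd2 (hfun ε u - curv A1 A2)) x
      = pd2 (ε ^ 2 • pd2 (hfun ε u - curv A1 A2)) x := by
        rw [pd2, pd2, fderiv_const_smul_field]
        rfl
    _ = -(pd2 (fun y => conj (u y) * sigP u A1 A2 y) x).im := by
        rw [hfirst, pd2, fderiv_fun_neg, neg_apply, fderiv_im_apply hpair]
        rfl
    _ = _ := congrArg (fun z : ℂ => -z.im) (fderiv_conj_mul (hu x) hσ A2 (0, 1))

theorem sq_mul_pd_pd_hfun_sub_curv (h : IsYMH ε u A1 A2) (hε : ε ≠ 0) (hu : ContDiff ℝ 2 u)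
    (hA1 : ContDiff ℝ 2 A1) (hA2 : ContDiff ℝ 2 A2) (x : ℝ × ℝ) :
    ε ^ 2 * (pd1 (pd1 (hfun ε u - curv A1 A2)) x + pd2 (pd2 (hfun ε u - curv A1 A2)) x) =
      ‖u x‖ ^ 2 * (hfun ε u x - curv A1 A2 x) - ‖sigP u A1 A2 x‖ ^ 2 := by
  have hu_diff : Differentiable ℝ u := hu.differentiable (by simp)
  have hF_diff : Differentiable ℝ (curv A1 A2) :=
    (contDiff_curv (m := 1) hA1 hA2 le_rfl).differentiable (by simp)
  have hA1_one : ContDiff ℝ 1 A1 := hA1.of_le one_le_two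
  have hA2_one : ContDiff ℝ 1 A2 := hA2.of_le one_le_two
  have hσ : DifferentiableAt ℝ (sigP u A1 A2) x :=
    (contDiff_sigP hu hA1_one hA2_one le_rfl).differentiable (by simp) x
  have hconj : conj (sigP u A1 A2 x) = conj (D1 A1 u x) - I * conj (D2 A2 u x) := by
    rw [sigP, map_add, map_mul, conj_I, neg_mul, sub_eq_add_neg]
  have hnorm (z : ℂ) : conj z * z = (‖z‖ ^ 2 : ℝ) := by rw [conj_mul', ofReal_pow]
  rw [mul_add, h.sq_mul_pd1_pd1_hfun_sub_curv hε hu_diff hF_diff hσ,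
    h.sq_mul_pd2_pd2_hfun_sub_curv hε hu_diff hF_diff hσ]
  set σ := sigP u A1 A2
  calc -(conj (D1 A1 u x) * σ x + conj (u x) * D1 A1 σ x).re +
        -(conj (D2 A2 u x) * σ x + conj (u x) * D2 A2 σ x).im
      = -((conj (D1 A1 u x) - I * conj (D2 A2 u x)) * σ x +
          conj (u x) * (D1 A1 σ x - I * D2 A2 σ x)).re := by
        simp only [add_re, add_im, sub_re, sub_im, mul_re, mul_im, I_re, I_im]
        ring
    _ = -(conj (σ x) * σ x + (curv A1 A2 x - hfun ε u x : ℝ) * (conj (u x) * u x)).re := by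
        rw [h.D1_sigP_sub_I_mul_D2_sigP hu hA1_one hA2_one, hconj, mul_left_comm]
    _ = ‖u x‖ ^ 2 * (hfun ε u x - curv A1 A2 x) - ‖σ x‖ ^ 2 := by
        rw [hnorm, hnorm, ← ofReal_mul, ← ofReal_add, ofReal_re]
        ring

theorem pd_pd_hfun_sub_curv_le (h : IsYMH ε u A1 A2) (hε : ε ≠ 0) (hu : ContDiff ℝ 2 u)
    (hA1 : ContDiff ℝ 2 A1) (hA2 : ContDiff ℝ 2 A2) (x : ℝ × ℝ) :
    pd1 (pd1 (hfun ε u - curv A1 A2)) x + pd2 (pd2 (hfun ε u - curv A1 A2)) x ≤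
      ‖u x‖ ^ 2 / ε ^ 2 * (hfun ε u - curv A1 A2) x := by
  rw [div_mul_eq_mul_div, le_div_iff₀' (by positivity), h.sq_mul_pd_pd_hfun_sub_curv hε hu hA1 hA2]
  exact sub_le_self _ (sq_nonneg _)

theorem curv_le_hfun (h : IsYMH ε u A1 A2) (hε : ε ≠ 0) (hu : ContDiff ℝ 2 u)
    (hA1 : ContDiff ℝ 3 A1) (hA2 : ContDiff ℝ 3 A2) (hnorm : Periodic2 fun x => ‖u x‖)
    (hcurv : Periodic2 (curv A1 A2)) (hne : ∃ x, u x ≠ 0) (x : ℝ × ℝ) :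
    curv A1 A2 x ≤ hfun ε u x := by
  obtain ⟨q, hq⟩ := hne
  have hle : (2 : WithTop ℕ∞) ≤ 3 := by norm_num
  have hper : Periodic2 (hfun ε u - curv A1 A2) :=
    (periodic2_hfun hnorm ε).sub hcurv
  have hsmooth : ContDiff ℝ 2 (hfun ε u - curv A1 A2) :=
    (contDiff_hfun hu ε).sub (contDiff_curv hA1 hA2 (by norm_num))
  exact sub_nonneg.1 (hper.nonneg_of_pd_pd_le (c := fun y => ‖u y‖ ^ 2 / ε ^ 2) (q := q) hsmooth
    ((hu.continuous.norm.pow 2).div_const _) (fun y => by positivity) (by positivity)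
    (h.pd_pd_hfun_sub_curv_le hε hu (hA1.of_le hle) (hA2.of_le hle)) x)

theorem curv_eq_hfun_of_apply_eq (h : IsYMH ε u A1 A2) (hε : ε ≠ 0) (hu : ContDiff ℝ 2 u)
    (hA1 : ContDiff ℝ 3 A1) (hA2 : ContDiff ℝ 3 A2) (hbound : ∀ x, curv A1 A2 x ≤ hfun ε u x)
    {x₀ : ℝ × ℝ} (hx₀ : curv A1 A2 x₀ = hfun ε u x₀) (x : ℝ × ℝ) :
    curv A1 A2 x = hfun ε u x := by
  have hle : (2 : WithTop ℕ∞) ≤ 3 := by norm_num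
  have hsmooth : ContDiff ℝ 2 (hfun ε u - curv A1 A2) :=
    (contDiff_hfun hu ε).sub (contDiff_curv hA1 hA2 (by norm_num))
  exact (sub_eq_zero.1 (eq_zero_of_pd_pd_le (c := fun y => ‖u y‖ ^ 2 / ε ^ 2) hsmooth
    ((hu.continuous.norm.pow 2).div_const _) (fun y => sub_nonneg.2 (hbound y))
    (h.pd_pd_hfun_sub_curv_le hε hu (hA1.of_le hle) (hA2.of_le hle))
    (sub_eq_zero.2 hx₀.symm) x)).symm

end IsYMH

theorem curv_neg (A1 A2 : ℝ × ℝ → ℝ) : curv (-A1) (-A2) = -curv A1 A2 := by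
  funext x
  simp only [curv, pd1, pd2, fderiv_neg, neg_apply, Pi.neg_apply]
  ring

theorem hfun_conj (ε : ℝ) (u : ℝ × ℝ → ℂ) : hfun ε (fun x => conj (u x)) = hfun ε u := by
  funext x
  rw [hfun, hfun, norm_conj]

theorem D1_neg_conj (A : ℝ × ℝ → ℝ) (f : ℝ × ℝ → ℂ) :
    D1 (-A) (fun x => conj (f x)) = fun x => conj (D1 A f x) :=
  funext (covDeriv_neg_conj A (1, 0) f)

theorem D2_neg_conj (A : ℝ × ℝ → ℝ) (f : ℝ × ℝ → ℂ) :
    D2 (-A) (fun x => conj (f x)) = fun x => conj (D2 A f x) :=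
  funext (covDeriv_neg_conj A (0, 1) f)

theorem IsYMH.conj (h : IsYMH ε u A1 A2) : IsYMH ε (fun x => conj (u x)) (-A1) (-A2) := by
  have hpd_neg (v x : ℝ × ℝ) : fderiv ℝ (-curv A1 A2) x v = -fderiv ℝ (curv A1 A2) x v := by
    rw [fderiv_neg, neg_apply]
  obtain ⟨hsection, hpd2, hpd1⟩ := h
  simp only [IsYMH, D1_neg_conj, D2_neg_conj, hfun_conj, curv_neg, pd1, pd2, hpd_neg]
  refine ⟨fun x => ?_, fun x => ?_, fun x => ?_⟩
  · rw [← map_add, ← map_neg, hsection x, map_mul, conj_ofReal]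
  · rw [← map_mul, conj_im, mul_neg, neg_inj]
    exact hpd2 x
  · rw [← map_mul, conj_im, mul_neg, neg_inj]
    exact hpd1 x

/-- Sections and connections of a line bundle of any degree over the torus are covered: on `ℝ²`
they are periodic only up to gauge, but `|u|` and `F` are periodic. -/
theorem curvature_pointwise_bound_general (hε : ε ≠ 0) (hu : ContDiff ℝ 2 u)
    (hA1 : ContDiff ℝ 3 A1) (hA2 : ContDiff ℝ 3 A2) (hnorm : Periodic2 fun x => ‖u x‖)
    (hcurv : Periodic2 (curv A1 A2)) (hYMH : IsYMH ε u A1 A2) (hne : ∃ x, u x ≠ 0) :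
    (∀ x, -hfun ε u x ≤ curv A1 A2 x ∧ curv A1 A2 x ≤ hfun ε u x) ∧
    ((∃ x₀, curv A1 A2 x₀ = hfun ε u x₀) → ∀ x, curv A1 A2 x = hfun ε u x) ∧
    ((∃ x₀, curv A1 A2 x₀ = -hfun ε u x₀) → ∀ x, curv A1 A2 x = -hfun ε u x) := by
  have hconj : ContDiff ℝ 2 fun x => conj (u x) := conjCLE.contDiff.comp hu
  have hconj_norm : Periodic2 fun x => ‖conj (u x)‖ := by simpa only [norm_conj] using hnorm
  have hneg_curv : Periodic2 (curv (-A1) (-A2)) := by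
    rw [curv_neg]
    exact hcurv.comp Neg.neg
  have hupper := hYMH.curv_le_hfun hε hu hA1 hA2 hnorm hcurv hne
  have hlower := hYMH.conj.curv_le_hfun hε hconj hA1.neg hA2.neg hconj_norm hneg_curv
    (by simpa using hne)
  refine ⟨fun x => ⟨?_, hupper x⟩, fun ⟨x₀, hx₀⟩ => ?_, fun ⟨x₀, hx₀⟩ x => ?_⟩
  · simpa [curv_neg, hfun_conj, neg_le] using hlower x
  · exact hYMH.curv_eq_hfun_of_apply_eq hε hu hA1 hA2 hupper hx₀
  · have hrigid := hYMH.conj.curv_eq_hfun_of_apply_eq hε hconj hA1.neg hA2.neg hlower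
      (x₀ := x₀) (by simp [curv_neg, hfun_conj, hx₀]) x
    simpa [curv_neg, hfun_conj, neg_eq_iff_eq_neg] using hrigid

end YangMillsHiggs

/-- Pointwise bound on the curvature and rigidity (Proposition 3.5(a), flat torus case). -/
theorem curvature_pointwise_bound
    (ε : ℝ) (hε : 0 < ε) (u : ℝ × ℝ → ℂ) (A1 A2 : ℝ × ℝ → ℝ)
    (hu : ContDiff ℝ (⊤ : ℕ∞) u) (hup : Periodic2 u)
    (hA1 : ContDiff ℝ (⊤ : ℕ∞) A1) (hA1p : Periodic2 A1)
    (hA2 : ContDiff ℝ (⊤ : ℕ∞) A2) (hA2p : Periodic2 A2)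
    (hYMH : IsYMH ε u A1 A2) (hne : ∃ x, u x ≠ 0) :
    (∀ x, -hfun ε u x ≤ curv A1 A2 x ∧ curv A1 A2 x ≤ hfun ε u x) ∧
    ((∃ x₀, curv A1 A2 x₀ = hfun ε u x₀) → ∀ x, curv A1 A2 x = hfun ε u x) ∧
    ((∃ x₀, curv A1 A2 x₀ = -hfun ε u x₀) → ∀ x, curv A1 A2 x = -hfun ε u x) :=
  curvature_pointwise_bound_general hε.ne' (mod_cast contDiff_infty.1 hu 2)
    (mod_cast contDiff_infty.1 hA1 3) (mod_cast contDiff_infty.1 hA2 3) (hup.comp norm)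
    (periodic2_curv hA1p hA2p) hYMH hne
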